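/- Let W be a finite string over {A, X, B} which does not both start with the letter A and end with the letter A. Then |(WX)| + 2|(WB)| − |W| = 0, where |(·)| denotes the cyclic value and |W| the open value in the tight puzzle. -/

import Mathlib

/-!
The "tight puzzle" of Schwartz–Tabachnikov.  Strings over the alphabet `{A, X, B}`;
word list (coefficient, weight): `X (1,0)`, `XA (1,1)`, `XAA (1,1)`, `AXA (2,1)`,
`AAA (-1,1)`, `BA (-1,1)`, `ABA (-1,1)`, `XXA (-1,1)`; in a parsing the word `X` may
never be immediately followed by the word `XA` or the word `BA`.
-/

open scoped Classical

/-- The three-letter alphabet. -/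
inductive PLetter | A | X | B
deriving DecidableEq

/-- Strings over the alphabet. -/
abbrev PWord := List PLetter

/-- The tight puzzle word list. -/
def tightWords : List PWord :=
  [[PLetter.X], [PLetter.X, PLetter.A], [PLetter.X, PLetter.A, PLetter.A],
   [PLetter.A, PLetter.X, PLetter.A], [PLetter.A, PLetter.A, PLetter.A],
   [PLetter.B, PLetter.A], [PLetter.A, PLetter.B, PLetter.A],
   [PLetter.X, PLetter.X, PLetter.A]]

/-- Coefficients of the words of the tight puzzle (`AXA ↦ 2`; `AAA, BA, ABA, XXA ↦ -1`;
`X, XA, XAA ↦ 1`). -/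
def tightCoeff (w : PWord) : ℤ :=
  if w = [PLetter.A, PLetter.X, PLetter.A] then 2
  else if w = [PLetter.A, PLetter.A, PLetter.A] ∨ w = [PLetter.B, PLetter.A] ∨
      w = [PLetter.A, PLetter.B, PLetter.A] ∨ w = [PLetter.X, PLetter.X, PLetter.A] then -1
  else 1

/-- Weights of the words: the word `X` has weight `0`, all other words weight `1`. -/
def wordWt (w : PWord) : ℕ := if w = [PLetter.X] then 0 else 1

/-- The forbidden adjacency: the word `X` immediately followed by `XA` or `BA`. -/
def Bad (u v : PWord) : Prop :=
  u = [PLetter.X] ∧ (v = [PLetter.X, PLetter.A] ∨ v = [PLetter.B, PLetter.A])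

/-- The contribution `coefficient · t^weight ∈ ℤ[t]` of a parsing `L`. -/
noncomputable def parseVal (c : PWord → ℤ) (L : List PWord) : Polynomial ℤ :=
  Polynomial.C ((L.map c).prod) * Polynomial.X ^ ((L.map wordWt).sum)

/-- `L` is a parsing in the tight puzzle: all its words are on the word list and the
forbidden adjacency never occurs. -/
def TightChain (L : List PWord) : Prop :=
  (∀ w ∈ L, w ∈ tightWords) ∧ List.Chain' (fun u v => ¬ Bad u v) L

/-- The *core* of a string: what remains after deleting all leading and trailing `X`s. -/
def core (s : PWord) : PWord :=
  ((s.dropWhile (· == PLetter.X)).reverse.dropWhile (· == PLetter.X)).reverse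

/-- `L` is a parsing of the bi-infinite string `⋯XX·W·XX⋯` (with the infinitely many
padding `X`s parsed as copies of the word `X` and trimmed away): the words of `L`
concatenate to `W` up to padding by `X`s on either side, `L` neither starts nor ends
with the word `X`, and (because of the padding `X`-words on the left) the first word
of `L` is not `XA` or `BA`. -/
def IsOpenParsing (W : PWord) (L : List PWord) : Prop :=
  TightChain L ∧ core L.flatten = core W ∧
  ∀ h : L ≠ [],
    L.head h ≠ [PLetter.X] ∧ L.head h ≠ [PLetter.X, PLetter.A] ∧
    L.head h ≠ [PLetter.B, PLetter.A] ∧ L.getLast h ≠ [PLetter.X]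

/-- `(r, L)` is a parsing of the cyclic string `(W)`: reading the necklace of the
letters of `W` starting at position `r`, the words of `L` concatenate to it, the
forbidden adjacency does not occur (cyclically), and `r < (last word).length`
(so that every parsing of the necklace is counted exactly once). -/
def IsCyclicParsing (W : PWord) (r : ℕ) (L : List PWord) : Prop :=
  TightChain L ∧
  ∃ h : L ≠ [], L.flatten = W.rotate r ∧ r < (L.getLast h).length ∧
    ¬ Bad (L.getLast h) (L.head h)

/-- `L` is a parsing of the locked string `[W]`: the words of `L` concatenate exactly
to `W`, no padding allowed. -/
def IsLockedParsing (W : PWord) (L : List PWord) : Prop :=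
  TightChain L ∧ L.flatten = W

/-- The nine words of both puzzles, as a function (used to enumerate parsings). -/
def wordOf : Fin 9 → PWord :=
  ![[PLetter.X], [PLetter.X, PLetter.A], [PLetter.X, PLetter.A, PLetter.A],
    [PLetter.X, PLetter.B, PLetter.A], [PLetter.A, PLetter.X, PLetter.A],
    [PLetter.A, PLetter.A, PLetter.A], [PLetter.B, PLetter.A],
    [PLetter.A, PLetter.B, PLetter.A], [PLetter.X, PLetter.X, PLetter.A]]

/-- The open value `|W| ∈ ℤ[t]`: the sum of `coefficient · t^weight` over all parsings
of the bi-infinite string `⋯XX·W·XX⋯` (any such parsing consists of at most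
`W.length + 2` words). -/
noncomputable def openVal (W : PWord) : Polynomial ℤ :=
  ∑ k ∈ Finset.range (W.length + 3), ∑ f : Fin k → Fin 9,
    if IsOpenParsing W ((List.ofFn f).map wordOf) then
      parseVal tightCoeff ((List.ofFn f).map wordOf)
    else 0

/-- The cyclic value `|(W)| ∈ ℤ[t]`: the sum of `coefficient · t^weight` over all
parsings of the cyclic string `(W)`. -/
noncomputable def cycVal (W : PWord) : Polynomial ℤ :=
  ∑ r ∈ Finset.range W.length, ∑ k ∈ Finset.range (W.length + 1), ∑ f : Fin k → Fin 9,
    if IsCyclicParsing W r ((List.ofFn f).map wordOf) then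
      parseVal tightCoeff ((List.ofFn f).map wordOf)
    else 0

/-- The locked value `|[W]| ∈ ℤ[t]`: the sum of `coefficient · t^weight` over all
parsings whose concatenation is exactly `W`. -/
noncomputable def lockVal (W : PWord) : Polynomial ℤ :=
  ∑ k ∈ Finset.range (W.length + 1), ∑ f : Fin k → Fin 9,
    if IsLockedParsing W ((List.ofFn f).map wordOf) then
      parseVal tightCoeff ((List.ofFn f).map wordOf)
    else 0


/-- The factor contributed by a single word of a parsing. -/
noncomputable def wordVal (w : PWord) : Polynomial ℤ :=
  Polynomial.C (tightCoeff w) * Polynomial.X ^ wordWt w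

/-- The total value of a set of parsings. -/
noncomputable def setVal (S : Set (List PWord)) : Polynomial ℤ :=
  ∑ᶠ L ∈ S, parseVal tightCoeff L

theorem parseVal_cons (w : PWord) (L : List PWord) :
    parseVal tightCoeff (w :: L) = wordVal w * parseVal tightCoeff L := by
  simp only [parseVal, wordVal, List.map_cons, List.prod_cons, List.sum_cons, map_mul, pow_add]
  ring

theorem parseVal_concat (w : PWord) (L : List PWord) :
    parseVal tightCoeff (L ++ [w]) = wordVal w * parseVal tightCoeff L := by
  simp only [parseVal, wordVal, List.map_append, List.prod_append, List.sum_append,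
    List.map_cons, List.map_nil, List.prod_singleton, List.sum_singleton, map_mul, pow_add]
  ring

theorem wordOf_injective : Function.Injective wordOf := by
  intro i j h
  fin_cases i <;> fin_cases j <;> simp_all [wordOf]

theorem exists_wordOf_eq {w : PWord} (hw : w ∈ tightWords) : ∃ i, wordOf i = w := by
  simp only [tightWords, List.mem_cons, List.not_mem_nil, or_false] at hw
  rcases hw with rfl | rfl | rfl | rfl | rfl | rfl | rfl | rfl
  exacts [⟨0, rfl⟩, ⟨1, rfl⟩, ⟨2, rfl⟩, ⟨4, rfl⟩, ⟨5, rfl⟩, ⟨6, rfl⟩, ⟨7, rfl⟩, ⟨8, rfl⟩]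

theorem setOf_eq_coe_image {P : List PWord → Prop} {n : ℕ}
    (hP : ∀ L, P L → (∀ w ∈ L, w ∈ tightWords) ∧ L.length < n) :
    {L | P L} = ((((Finset.range n).sigma fun k => (Finset.univ : Finset (Fin k → Fin 9))).filter
      fun p => P ((List.ofFn p.2).map wordOf)).image
        fun p => (List.ofFn p.2).map wordOf : Finset (List PWord)) := by
  ext L
  simp only [Set.mem_ofPred_eq, Finset.coe_image, Finset.coe_filter, Finset.mem_sigma,
    Finset.mem_range, Finset.mem_univ, and_true, Set.mem_image, Sigma.exists]
  constructor
  · intro hL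
    obtain ⟨hw, hn⟩ := hP L hL
    have hL' : ∃ M : List (Fin 9), M.map wordOf = L := by
      have : L ∈ Set.range (List.map wordOf) := by
        rw [Set.range_list_map]
        exact fun w hwL => exists_wordOf_eq (hw w hwL)
      exact this
    obtain ⟨M, rfl⟩ := hL'
    have hM : (List.ofFn M.get).map wordOf = M.map wordOf := by rw [List.ofFn_get]
    exact ⟨M.length, M.get, ⟨by simpa using hn, by rwa [hM]⟩, hM⟩
  · rintro ⟨k, f, ⟨-, h⟩, rfl⟩
    exact h

theorem finite_setOf_parsing {P : List PWord → Prop} {n : ℕ}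
    (hP : ∀ L, P L → (∀ w ∈ L, w ∈ tightWords) ∧ L.length < n) : {L | P L}.Finite := by
  rw [setOf_eq_coe_image hP]
  exact Finset.finite_toSet _

theorem sum_ite_eq_setVal {P : List PWord → Prop} {n : ℕ}
    (hP : ∀ L, P L → (∀ w ∈ L, w ∈ tightWords) ∧ L.length < n) :
    (∑ k ∈ Finset.range n, ∑ f : Fin k → Fin 9,
      if P ((List.ofFn f).map wordOf) then parseVal tightCoeff ((List.ofFn f).map wordOf) else 0)
      = setVal {L | P L} := by
  have hinj : Function.Injective
      fun p : (Σ k, Fin k → Fin 9) => (List.ofFn p.2).map wordOf := by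
    intro p q h
    exact List.equivSigmaTuple.symm.injective (List.map_injective_iff.2 wordOf_injective h)
  rw [setVal, setOf_eq_coe_image hP, finsum_mem_coe_finset, Finset.sum_image hinj.injOn,
    Finset.sum_filter, Finset.sum_sigma']

theorem setVal_union {S T : Set (List PWord)} (hd : Disjoint S T) (hS : S.Finite)
    (hT : T.Finite) : setVal (S ∪ T) = setVal S + setVal T :=
  finsum_mem_union hd hS hT

theorem setVal_empty : setVal ∅ = 0 := finsum_mem_empty

theorem setVal_image {f : List PWord → List PWord} {w : PWord} (hf : Function.Injective f)
    (hval : ∀ L, parseVal tightCoeff (f L) = wordVal w * parseVal tightCoeff L)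
    {S : Set (List PWord)} (hS : S.Finite) : setVal (f '' S) = wordVal w * setVal S := by
  rw [setVal, finsum_mem_image hf.injOn, setVal, mul_finsum_mem' _ _ hS]
  simp only [hval]

theorem setVal_image_cons (w : PWord) {S : Set (List PWord)} (hS : S.Finite) :
    setVal ((w :: ·) '' S) = wordVal w * setVal S :=
  setVal_image (List.cons_injective) (parseVal_cons w) hS

theorem setVal_image_concat (w : PWord) {S : Set (List PWord)} (hS : S.Finite) :
    setVal ((· ++ [w]) '' S) = wordVal w * setVal S :=
  setVal_image (List.append_left_injective [w]) (parseVal_concat w) hS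

theorem setVal_exists_last {p : PWord → List PWord → Prop} (hfin : ∀ w, {L | p w L}.Finite) :
    ∀ {ws : List PWord}, ws.Nodup →
      {L | ∃ w ∈ ws, ∃ M, p w M ∧ L = M ++ [w]}.Finite ∧
      setVal {L | ∃ w ∈ ws, ∃ M, p w M ∧ L = M ++ [w]} =
        (ws.map fun w => wordVal w * setVal {L | p w L}).sum
  | [], _ => by simp [setVal_empty]
  | w :: ws, h => by
    obtain ⟨ihf, ih⟩ := setVal_exists_last hfin h.of_cons
    have hset : {L | ∃ v ∈ w :: ws, ∃ M, p v M ∧ L = M ++ [v]} =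
        (· ++ [w]) '' {L | p w L} ∪ {L | ∃ v ∈ ws, ∃ M, p v M ∧ L = M ++ [v]} := by
      ext L
      simp [eq_comm]
    have hd : Disjoint ((· ++ [w]) '' {L | p w L})
        {L | ∃ v ∈ ws, ∃ M, p v M ∧ L = M ++ [v]} := by
      rw [Set.disjoint_left]
      rintro _ ⟨M, -, rfl⟩ ⟨v, hv, M', -, h'⟩
      have : w = v := by simpa using (List.append_inj' h' rfl).2
      exact (List.nodup_cons.1 h).1 (this ▸ hv)
    rw [hset]
    refine ⟨((hfin w).image _).union ihf, ?_⟩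
    rw [setVal_union hd ((hfin w).image _) ihf, ih, setVal_image_concat w (hfin w)]
    simp

theorem tightWords_nodup : tightWords.Nodup := by decide

theorem tightChain_cons_cons (u v : PWord) (L : List PWord) :
    TightChain (u :: v :: L) ↔ u ∈ tightWords ∧ ¬ Bad u v ∧ TightChain (v :: L) := by
  simp only [TightChain, List.Chain', List.isChain_cons_cons, List.forall_mem_cons]
  tauto

theorem tightChain_singleton (u : PWord) : TightChain [u] ↔ u ∈ tightWords := by
  simp [TightChain, List.Chain']

theorem TightChain.of_cons {u : PWord} {L : List PWord} (h : TightChain (u :: L)) :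
    TightChain L :=
  ⟨fun w hw => h.1 w (List.mem_cons_of_mem _ hw), h.2.tail⟩

/-- Appending a word that is never the second member of a forbidden adjacency. -/
theorem tightChain_concat_iff {v : PWord} (hv : v ∈ tightWords) (hb : ∀ u, ¬ Bad u v)
    (L : List PWord) : TightChain (L ++ [v]) ↔ TightChain L := by
  simp only [TightChain, List.Chain', List.isChain_append, List.forall_mem_append]
  simp [hv, hb]

theorem length_le_length_flatten {L : List PWord} (h : ∀ w ∈ L, w ∈ tightWords) :
    L.length ≤ L.flatten.length := by
  induction L with
  | nil => simp
  | cons w L ih =>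
    have hw : 1 ≤ w.length := by
      have := h w (by simp)
      simp only [tightWords, List.mem_cons, List.not_mem_nil, or_false] at this
      rcases this with rfl | rfl | rfl | rfl | rfl | rfl | rfl | rfl <;> simp
    have := ih fun v hv => h v (by simp [hv])
    simp only [List.length_cons, List.flatten_cons, List.length_append]
    lia

/-- The parsings of `W` with its prefix `p` and suffix `s` removed, which may be put
between the words `u` and `v`. -/
def between (u v : PWord) (p s W : PWord) : Set (List PWord) :=
  {L | TightChain (u :: (L ++ [v])) ∧ p ++ L.flatten ++ s = W}

theorem between_finite (u v p s W : PWord) : (between u v p s W).Finite := by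
  refine finite_setOf_parsing (n := W.length + 1) ?_
  rintro L ⟨h, rfl⟩
  have hw : ∀ w ∈ L, w ∈ tightWords := fun w hw => h.1 w (by simp [hw])
  have := length_le_length_flatten hw
  exact ⟨hw, by simp only [List.length_append]; lia⟩

/-- The set `between u v p s W` only depends on which forbidden adjacencies `u` and `v`
can take part in. -/
theorem between_congr {u u' v v' : PWord} (hu : u ∈ tightWords) (hu' : u' ∈ tightWords)
    (hv : v ∈ tightWords) (hv' : v' ∈ tightWords) (huu : ∀ w, Bad u w ↔ Bad u' w)
    (hvv : ∀ w, Bad w v ↔ Bad w v') (p s W : PWord) :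
    between u v p s W = between u' v' p s W := by
  ext L
  simp only [between, Set.mem_ofPred_eq, TightChain, List.Chain', List.isChain_cons,
    List.isChain_append, List.forall_mem_cons, List.forall_mem_append]
  cases L <;> simp [hu, hu', hv, hv', huu, hvv]

theorem append_eq_rotate_iff {U p q V : PWord} :
    U ++ (p ++ q) = V.rotate q.length ∧ q.length ≤ V.length ↔ q ++ U ++ p = V := by
  constructor
  · rintro ⟨h, hq⟩
    rw [List.rotate_eq_drop_append_take hq, ← List.append_assoc] at h
    obtain ⟨h₁, h₂⟩ := List.append_inj' h (by simp [hq])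
    rw [List.append_assoc, h₁]
    nth_rewrite 1 [h₂]
    exact List.take_append_drop _ _
  · rintro rfl
    refine ⟨?_, by simp⟩
    rw [List.append_assoc, List.rotate_append_length_eq, List.append_assoc]

/-- Closing up a cyclic parsing: the word `w` covering the cut is removed. -/
theorem isCyclicParsing_concat_iff (V : PWord) (r : ℕ) (w : PWord) (M : List PWord) :
    IsCyclicParsing V r (M ++ [w]) ∧ r < V.length ↔
      r < w.length ∧ M ∈ between w w (w.drop (w.length - r)) (w.take (w.length - r)) V := by
  have hT : TightChain (w :: (M ++ [w])) ↔
      TightChain (M ++ [w]) ∧ ¬ Bad w ((M ++ [w]).head (by simp)) := by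
    cases M with
    | nil =>
      simp only [List.nil_append, tightChain_cons_cons, tightChain_singleton, List.head_cons]
      tauto
    | cons u M =>
      simp only [List.cons_append, tightChain_cons_cons, List.head_cons]
      constructor
      · rintro ⟨-, h⟩
        exact h.symm
      · rintro ⟨h₁, h₂⟩
        exact ⟨h₁.1 w (by simp), h₂, h₁⟩
  simp only [IsCyclicParsing, between, Set.mem_ofPred_eq, hT, List.getLast_append_singleton,
    List.flatten_append, List.flatten_cons, List.flatten_nil, List.append_nil]
  by_cases hr : r < w.length
  · have hlen : (w.drop (w.length - r)).length = r := by simp; lia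
    have key := append_eq_rotate_iff (U := M.flatten) (p := w.take (w.length - r))
      (q := w.drop (w.length - r)) (V := V)
    rw [hlen, List.take_append_drop] at key
    rw [← key]
    constructor
    · rintro ⟨⟨h₁, _, h₂, -, h₃⟩, h₄⟩
      exact ⟨hr, ⟨h₁, h₃⟩, h₂, h₄.le⟩
    · rintro ⟨-, ⟨h₁, h₃⟩, h₂, h₄⟩
      refine ⟨⟨h₁, by simp, h₂, hr, h₃⟩, ?_⟩
      have := congrArg List.length h₂
      simp only [List.length_append, List.length_rotate] at this
      lia
  · constructor
    · rintro ⟨⟨-, -, -, h, -⟩, -⟩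
      exact absurd h hr
    · rintro ⟨h, -⟩
      exact absurd h hr

theorem length_le_three {w : PWord} (hw : w ∈ tightWords) : w.length ≤ 3 := by
  simp only [tightWords, List.mem_cons, List.not_mem_nil, or_false] at hw
  rcases hw with rfl | rfl | rfl | rfl | rfl | rfl | rfl | rfl <;> simp

/-- The cyclic value, organised by the word covering the cut and the position of the cut. -/
theorem cycVal_eq (V : PWord) :
    cycVal V = ∑ r ∈ Finset.range 3, (tightWords.map fun w => wordVal w *
      setVal {M | r < w.length ∧
        M ∈ between w w (w.drop (w.length - r)) (w.take (w.length - r)) V}).sum := by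
  have hset : ∀ r, {L | IsCyclicParsing V r L ∧ r < V.length} =
      {L | ∃ w ∈ tightWords, ∃ M, (r < w.length ∧
        M ∈ between w w (w.drop (w.length - r)) (w.take (w.length - r)) V) ∧ L = M ++ [w]} := by
    intro r
    ext L
    constructor
    · intro h
      obtain ⟨M, w, rfl⟩ := L.eq_nil_or_concat'.resolve_left h.1.2.1
      exact ⟨w, h.1.1.1 w (by simp), M, (isCyclicParsing_concat_iff V r w M).1 h, rfl⟩
    · rintro ⟨w, -, M, h, rfl⟩
      exact (isCyclicParsing_concat_iff V r w M).2 h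
  have hsum : ∀ r, setVal {L | IsCyclicParsing V r L ∧ r < V.length} =
      (tightWords.map fun w => wordVal w * setVal {M | r < w.length ∧
        M ∈ between w w (w.drop (w.length - r)) (w.take (w.length - r)) V}).sum := by
    intro r
    rw [hset]
    refine (setVal_exists_last (fun w => ?_) tightWords_nodup).2
    exact (between_finite _ _ _ _ _).subset fun M h => h.2
  simp only [← hsum]
  have hcyc : cycVal V = ∑ r ∈ Finset.range V.length,
      setVal {L | IsCyclicParsing V r L ∧ r < V.length} := by
    refine Finset.sum_congr rfl fun r hr => ?_
    have hr' := Finset.mem_range.1 hr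
    simp only [hr', and_true]
    refine sum_ite_eq_setVal fun L h => ⟨h.1.1, ?_⟩
    have h₁ := length_le_length_flatten h.1.1
    obtain ⟨-, -, h₂, -⟩ := h
    rw [h₂, List.length_rotate] at h₁
    lia
  have hzero : ∀ r, ¬ (r < V.length ∧ r < 3) →
      setVal {L | IsCyclicParsing V r L ∧ r < V.length} = 0 := by
    intro r hr
    convert setVal_empty
    rw [Set.eq_empty_iff_forall_notMem]
    rintro L ⟨h, h'⟩
    obtain ⟨hT, hne, -, hlt, -⟩ := h
    exact hr ⟨h', hlt.trans_le (length_le_three (hT.1 _ (List.getLast_mem hne)))⟩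
  rw [hcyc]
  rcases le_total V.length 3 with h | h
  · refine Finset.sum_subset (Finset.range_mono h) fun r _ hr => hzero r fun h' => ?_
    exact hr (Finset.mem_range.2 h'.1)
  · refine (Finset.sum_subset (Finset.range_mono h) fun r _ hr => hzero r fun h' => ?_).symm
    exact hr (Finset.mem_range.2 h'.2)

theorem between_concat {s : PWord} (hs : s ≠ []) (u v p W : PWord) (y : PLetter) :
    between u v p s (W ++ [y]) =
      if s.getLast? = some y then between u v p s.dropLast W else ∅ := by
  obtain ⟨s, z, rfl⟩ := s.eq_nil_or_concat'.resolve_left hs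
  ext L
  by_cases h : z = y
  · subst h
    simp [between, ← List.append_assoc]
  · have : ¬ (p ++ L.flatten ++ s) ++ [z] = W ++ [y] := fun h' =>
      h (by simpa using (List.append_inj' h' rfl).2)
    simp only [List.append_assoc] at this
    simp [between, h, this]

theorem wordVal_X : wordVal [.X] = 1 := by simp [wordVal, tightCoeff, wordWt]

theorem wordVal_XA : wordVal [.X, .A] = Polynomial.X := by simp [wordVal, tightCoeff, wordWt]

theorem wordVal_XAA : wordVal [.X, .A, .A] = Polynomial.X := by
  simp [wordVal, tightCoeff, wordWt]

theorem wordVal_AXA : wordVal [.A, .X, .A] = 2 * Polynomial.X := by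
  simp [wordVal, tightCoeff, wordWt]

theorem wordVal_BA : wordVal [.B, .A] = -Polynomial.X := by simp [wordVal, tightCoeff, wordWt]

theorem wordVal_ABA : wordVal [.A, .B, .A] = -Polynomial.X := by
  simp [wordVal, tightCoeff, wordWt]

theorem wordVal_XXA : wordVal [.X, .X, .A] = -Polynomial.X := by
  simp [wordVal, tightCoeff, wordWt]

/-- The value of the parsings of `W` without its prefix `p`, preceded by the word `X` and
with no restriction at the end. -/
noncomputable def afterXVal (p W : PWord) : Polynomial ℤ :=
  setVal (between [.X] [.A, .A, .A] p [] W)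

/-- The value of the parsings of `W` without its prefix `p` and suffix `s`, with no
restriction at either end. -/
noncomputable def freeVal (p s W : PWord) : Polynomial ℤ :=
  setVal (between [.A, .A, .A] [.A, .A, .A] p s W)

/-- The value of the parsings of `W` without its prefix `p` that do not end with the
word `X`. -/
noncomputable def cappedVal (p W : PWord) : Polynomial ℤ :=
  setVal (between [.A, .A, .A] [.X, .A] p [] W)

theorem between_eq_free {w : PWord} (hw : w ∈ tightWords) (h : 2 < w.length) (p s W : PWord) :
    between w w p s W = between [.A, .A, .A] [.A, .A, .A] p s W := by
  refine between_congr hw (by simp [tightWords]) hw (by simp [tightWords]) (fun v => ?_)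
    (fun v => ?_) p s W
  all_goals
    simp only [Bad]
    grind

theorem between_eq_capped {w : PWord} (hw : w ∈ tightWords) (h : w.length = 2)
    (p s W : PWord) : between w w p s W = between [.A, .A, .A] [.X, .A] p s W := by
  have hw' : w = [.X, .A] ∨ w = [.B, .A] := by
    simp only [tightWords, List.mem_cons, List.not_mem_nil, or_false] at hw
    grind
  refine between_congr hw (by simp [tightWords]) hw (by simp [tightWords]) (fun v => ?_)
    (fun v => ?_) p s W
  all_goals
    simp only [Bad]
    grind

theorem between_X_X (p s W : PWord) :
    between [.X] [.X] p s W = between [.X] [.A, .A, .A] p s W :=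
  between_congr (by simp [tightWords]) (by simp [tightWords]) (by simp [tightWords])
    (by simp [tightWords]) (fun _ => Iff.rfl) (fun v => by simp [Bad]) p s W

theorem cycVal_concat_X (W : PWord) :
    cycVal (W ++ [.X]) = afterXVal [] W + Polynomial.X * cappedVal [.A] W +
      Polynomial.X * freeVal [.A, .A] [] W + 2 * Polynomial.X * freeVal [.A] [.A] W -
      Polynomial.X * freeVal [.X, .A] [] W - Polynomial.X * freeVal [.A] [.X] W := by
  rw [cycVal_eq]
  simp [Finset.sum_range_succ, tightWords, between_concat, setVal_empty]
  rw [between_X_X, between_eq_capped, between_eq_free (w := [.X, .A, .A]),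
    between_eq_free (w := [.A, .X, .A]), between_eq_free (w := [.X, .X, .A]),
    between_eq_free (w := [.X, .X, .A])] <;> try simp [tightWords]
  simp only [afterXVal, freeVal, cappedVal, wordVal_X, wordVal_XA, wordVal_XAA, wordVal_AXA,
    wordVal_XXA]
  ring

theorem cycVal_concat_B (W : PWord) :
    cycVal (W ++ [.B]) =
      -(Polynomial.X * cappedVal [.A] W) - Polynomial.X * freeVal [.A] [.A] W := by
  rw [cycVal_eq]
  simp [Finset.sum_range_succ, tightWords, between_concat, setVal_empty]
  rw [between_eq_capped, between_eq_free] <;> try simp [tightWords]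
  simp only [freeVal, cappedVal, wordVal_BA, wordVal_ABA]
  ring

theorem not_bad_of_length {w : PWord} (h : 2 < w.length) (u : PWord) : ¬ Bad u w := by
  rintro ⟨-, rfl | rfl⟩ <;> simp at h

theorem tightChain_concat_AAA (L : List PWord) :
    TightChain (L ++ [[.A, .A, .A]]) ↔ TightChain L :=
  tightChain_concat_iff (by simp [tightWords]) (not_bad_of_length (by simp)) L

theorem tightChain_concat_X (L : List PWord) : TightChain (L ++ [[.X]]) ↔ TightChain L :=
  tightChain_concat_iff (by simp [tightWords]) (fun u => by simp [Bad]) L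

theorem mem_between_AAA (u p s W : PWord) (L : List PWord) :
    L ∈ between u [.A, .A, .A] p s W ↔ TightChain (u :: L) ∧ p ++ L.flatten ++ s = W := by
  rw [between, Set.mem_ofPred_eq, ← List.cons_append, tightChain_concat_AAA]

theorem tightChain_concat_XA {u : PWord} {L : List PWord} (hu : u ≠ [.X]) :
    TightChain (u :: (L ++ [[.X, .A]])) ↔ TightChain (u :: L) ∧ L.getLast? ≠ some [.X] := by
  have hXA : [PLetter.X, PLetter.A] ∈ tightWords := by simp [tightWords]
  rcases L.eq_nil_or_concat' with rfl | ⟨M, v, rfl⟩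
  · simp [tightChain_cons_cons, tightChain_singleton, Bad, hu, hXA]
  · rw [← List.cons_append]
    have hlast : (u :: (M ++ [v])).getLast? = some v := by
      rw [← List.cons_append, List.getLast?_concat]
    simp only [TightChain, List.Chain', List.isChain_append, List.forall_mem_append]
    simp [hXA, Bad, hlast, -List.cons_append, and_assoc]

/-- A parsing either does not end with the word `X`, or this last word can be removed. -/
theorem freeVal_eq_cappedVal_add (p W : PWord) :
    freeVal p [] W = cappedVal p W + freeVal p [.X] W := by
  have hset : between [.A, .A, .A] [.A, .A, .A] p [] W =
      between [.A, .A, .A] [.X, .A] p [] W ∪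
        (· ++ [[.X]]) '' between [.A, .A, .A] [.A, .A, .A] p [.X] W := by
    ext L
    simp only [Set.mem_union, Set.mem_image, mem_between_AAA]
    simp only [between, Set.mem_ofPred_eq, tightChain_concat_XA (show
      [PLetter.A, PLetter.A, PLetter.A] ≠ [.X] by simp)]
    constructor
    · rintro ⟨h₁, h₂⟩
      by_cases hl : L.getLast? = some [.X]
      · obtain ⟨M, rfl⟩ := List.getLast?_eq_some_iff.1 hl
        rw [← List.cons_append, tightChain_concat_X] at h₁
        exact Or.inr ⟨M, ⟨h₁, by simpa using h₂⟩, rfl⟩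
      · exact Or.inl ⟨⟨h₁, hl⟩, h₂⟩
    · rintro (⟨⟨h₁, -⟩, h₂⟩ | ⟨M, ⟨h₁, h₂⟩, rfl⟩)
      · exact ⟨h₁, h₂⟩
      · exact ⟨by rwa [← List.cons_append, tightChain_concat_X], by simpa using h₂⟩
  have hd : Disjoint (between [.A, .A, .A] [.X, .A] p [] W)
      ((· ++ [[.X]]) '' between [.A, .A, .A] [.A, .A, .A] p [.X] W) := by
    rw [Set.disjoint_left]
    rintro _ ⟨h, -⟩ ⟨M, -, rfl⟩
    rw [tightChain_concat_XA (by simp)] at h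
    simp at h
  rw [freeVal, hset, setVal_union hd (between_finite _ _ _ _ _)
    ((between_finite _ _ _ _ _).image _), setVal_image_concat _ (between_finite _ _ _ _ _),
    wordVal_X, one_mul, cappedVal, freeVal]

/-- The value of the parsings of `W` padded by `X`s: either `W` is preceded by the word `X`,
or one of the words `XAA`, `XXA` sticks out to the left of `W`. -/
noncomputable def paddedVal (W : PWord) : Polynomial ℤ :=
  afterXVal [] W + Polynomial.X * freeVal [.A, .A] [] W - Polynomial.X * freeVal [.X, .A] [] W -
    Polynomial.X * freeVal [.A] [] W

theorem cycVal_add_two_mul_cycVal (W : PWord) :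
    cycVal (W ++ [.X]) + 2 * cycVal (W ++ [.B]) = paddedVal W := by
  rw [cycVal_concat_X, cycVal_concat_B, paddedVal, freeVal_eq_cappedVal_add [.A] W]
  ring

theorem eq_X_or_exists_concat_A {w : PWord} (hw : w ∈ tightWords) :
    w = [.X] ∨ ∃ v, w = v ++ [.A] := by
  simp only [tightWords, List.mem_cons, List.not_mem_nil, or_false] at hw
  rcases hw with rfl | rfl | rfl | rfl | rfl | rfl | rfl | rfl
  exacts [Or.inl rfl, Or.inr ⟨[.X], rfl⟩, Or.inr ⟨[.X, .A], rfl⟩, Or.inr ⟨[.A, .X], rfl⟩,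
    Or.inr ⟨[.A, .A], rfl⟩, Or.inr ⟨[.B], rfl⟩, Or.inr ⟨[.A, .B], rfl⟩, Or.inr ⟨[.X, .X], rfl⟩]

/-- A parsing ends with the word `X` exactly if the parsed string ends with the letter `X`. -/
theorem getLast?_flatten_eq_X_iff {L : List PWord} (h : ∀ w ∈ L, w ∈ tightWords) :
    L.flatten.getLast? = some .X ↔ L.getLast? = some [.X] := by
  rcases L.eq_nil_or_concat' with rfl | ⟨M, w, rfl⟩
  · simp
  · rcases eq_X_or_exists_concat_A (h w (by simp)) with rfl | ⟨v, rfl⟩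
    · simp
    · simp [← List.append_assoc, List.append_eq_singleton_iff]

theorem setVal_between_concat_X {p : PWord} (hp : p.getLast? ≠ some .X) (u W : PWord) :
    setVal (between u [.A, .A, .A] p [] (W ++ [.X])) = setVal (between u [.A, .A, .A] p [] W) := by
  have hset : between u [.A, .A, .A] p [] (W ++ [.X]) =
      (· ++ [[.X]]) '' between u [.A, .A, .A] p [] W := by
    ext L
    simp only [Set.mem_image, mem_between_AAA, List.append_nil]
    constructor
    · rintro ⟨h₁, h₂⟩
      have hl : L.getLast? = some [.X] := by
        rw [← getLast?_flatten_eq_X_iff h₁.of_cons.1]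
        have := congrArg List.getLast? h₂
        rw [List.getLast?_append, List.getLast?_concat] at this
        cases hL : L.flatten.getLast? with
        | none => exact absurd (by simpa [hL] using this) hp
        | some a => simpa [hL] using this
      obtain ⟨M, rfl⟩ := List.getLast?_eq_some_iff.1 hl
      rw [← List.cons_append, tightChain_concat_X] at h₁
      refine ⟨M, ⟨h₁, ?_⟩, rfl⟩
      simpa [← List.append_assoc] using h₂
    · rintro ⟨M, ⟨h₁, rfl⟩, rfl⟩
      exact ⟨by rwa [← List.cons_append, tightChain_concat_X], by simp⟩
  rw [hset, setVal_image_concat _ (between_finite _ _ _ _ _), wordVal_X, one_mul]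

theorem paddedVal_concat_X (W : PWord) : paddedVal (W ++ [.X]) = paddedVal W := by
  simp only [paddedVal, afterXVal, freeVal]
  rw [setVal_between_concat_X, setVal_between_concat_X, setVal_between_concat_X,
    setVal_between_concat_X] <;> simp

theorem between_cons_cons (u v p s W : PWord) (y : PLetter) :
    between u v (y :: p) s (y :: W) = between u v p s W := by
  simp [between]

theorem between_cons_cons_of_ne {y z : PLetter} (h : y ≠ z) (u v p s W : PWord) :
    between u v (y :: p) s (z :: W) = ∅ := by
  simp [between, h]

theorem tightChain_cons_iff_of_length {w : PWord} (hw : w ∈ tightWords) (h : 2 < w.length)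
    (L : List PWord) : TightChain (w :: L) ↔ TightChain ([.A, .A, .A] :: L) := by
  have hX : w ≠ [.X] := by
    rintro rfl
    simp at h
  have hA : [PLetter.A, PLetter.A, PLetter.A] ∈ tightWords := by simp [tightWords]
  cases L with
  | nil => simp [tightChain_singleton, hw, hA]
  | cons v L => simp [tightChain_cons_cons, hw, Bad, hX, hA]

theorem afterXVal_cons_X (W : PWord) :
    afterXVal [] (.X :: W) = afterXVal [] W + Polynomial.X * freeVal [.A, .A] [] W -
      Polynomial.X * freeVal [.X, .A] [] W := by
  have hset : between [.X] [.A, .A, .A] [] [] (.X :: W) =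
      ([.X] :: ·) '' between [.X] [.A, .A, .A] [] [] W ∪
        (([.X, .A, .A] :: ·) '' between [.A, .A, .A] [.A, .A, .A] [.A, .A] [] W ∪
          ([.X, .X, .A] :: ·) '' between [.A, .A, .A] [.A, .A, .A] [.X, .A] [] W) := by
    ext L
    simp only [Set.mem_union, Set.mem_image, mem_between_AAA, List.append_nil]
    constructor
    · rintro ⟨h₁, h₂⟩
      cases L with
      | nil => simp at h₂
      | cons w M =>
        rw [tightChain_cons_cons] at h₁
        obtain ⟨-, hb, hM⟩ := h₁
        have hw := hM.1 w (by simp)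
        have hw' := hw
        simp only [tightWords, List.mem_cons, List.not_mem_nil, or_false] at hw
        rcases hw with rfl | rfl | rfl | rfl | rfl | rfl | rfl | rfl <;> simp [Bad] at h₂ hb
        · exact Or.inl ⟨M, ⟨hM, by simpa using h₂⟩, rfl⟩
        · rw [tightChain_cons_iff_of_length hw' (by simp)] at hM
          exact Or.inr (Or.inl ⟨M, ⟨hM, by simpa using h₂⟩, rfl⟩)
        · rw [tightChain_cons_iff_of_length hw' (by simp)] at hM
          exact Or.inr (Or.inr ⟨M, ⟨hM, by simpa using h₂⟩, rfl⟩)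
    · rintro (⟨M, ⟨h₁, rfl⟩, rfl⟩ | ⟨M, ⟨h₁, rfl⟩, rfl⟩ | ⟨M, ⟨h₁, rfl⟩, rfl⟩)
      · simp [tightChain_cons_cons, h₁, Bad, tightWords]
      · rw [← tightChain_cons_iff_of_length (w := [.X, .A, .A]) (by simp [tightWords])
          (by simp)] at h₁
        simp [tightChain_cons_cons, h₁, Bad, tightWords]
      · rw [← tightChain_cons_iff_of_length (w := [.X, .X, .A]) (by simp [tightWords])
          (by simp)] at h₁
        simp [tightChain_cons_cons, h₁, Bad, tightWords]
  have hf := between_finite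
  rw [afterXVal, hset, setVal_union _ ((hf _ _ _ _ _).image _)
      (((hf _ _ _ _ _).image _).union ((hf _ _ _ _ _).image _)),
    setVal_union _ ((hf _ _ _ _ _).image _) ((hf _ _ _ _ _).image _),
    setVal_image_cons _ (hf _ _ _ _ _), setVal_image_cons _ (hf _ _ _ _ _),
    setVal_image_cons _ (hf _ _ _ _ _), wordVal_X, wordVal_XAA, wordVal_XXA]
  · simp only [afterXVal, freeVal]
    ring
  all_goals
    rw [Set.disjoint_left]
    simp

theorem paddedVal_cons_X (W : PWord) : paddedVal (.X :: W) = paddedVal W := by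
  simp only [paddedVal, afterXVal_cons_X]
  simp only [freeVal, between_cons_cons, between_cons_cons_of_ne (show PLetter.A ≠ .X by simp),
    setVal_empty]
  ring

theorem core_eq_rdropWhile (s : PWord) :
    core s = (s.dropWhile (· == PLetter.X)).rdropWhile (· == PLetter.X) := rfl

theorem getLast?_core_ne (s : PWord) : (core s).getLast? ≠ some .X := by
  intro h
  have hne : core s ≠ [] := by
    rintro h'
    simp [h'] at h
  rw [List.getLast?_eq_some_getLast hne, Option.some_inj] at h
  exact List.rdropWhile_last_not (· == PLetter.X) (s.dropWhile (· == PLetter.X)) hne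
    (beq_iff_eq.2 h)

theorem head?_core_ne (s : PWord) : (core s).head? ≠ some .X := by
  intro h
  have hpre : core s <+: s.dropWhile (· == PLetter.X) := List.rdropWhile_prefix _ _
  obtain ⟨r, hr⟩ := hpre
  have h' : (s.dropWhile (· == PLetter.X)).head? = some .X := by
    rw [← hr, List.head?_append, h]
    rfl
  have := List.head?_dropWhile_not (· == PLetter.X) s
  simp [h'] at this

theorem length_core_le (s : PWord) : (core s).length ≤ s.length :=
  (List.rdropWhile_prefix (· == PLetter.X) _).length_le.trans
    (List.dropWhile_suffix (· == PLetter.X)).length_le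

theorem core_eq_dropWhile {s : PWord} (h : s.getLast? ≠ some .X) :
    core s = s.dropWhile (· == PLetter.X) := by
  rw [core_eq_rdropWhile, List.rdropWhile_eq_self_iff]
  intro hne hX
  obtain ⟨r, hr⟩ := List.dropWhile_suffix (l := s) (· == PLetter.X)
  apply h
  rw [← hr, List.getLast?_append, List.getLast?_eq_some_getLast hne]
  simpa using hX

theorem paddedVal_core (W : PWord) : paddedVal (core W) = paddedVal W := by
  have hdrop : ∀ s : PWord, paddedVal (s.dropWhile (· == PLetter.X)) = paddedVal s := by
    intro s
    induction s with
    | nil => rfl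
    | cons y s ih =>
      by_cases hy : y = .X
      · subst hy
        rw [paddedVal_cons_X, ← ih]
        simp
      · simp [hy]
  have hrdrop : ∀ s : PWord, paddedVal (s.rdropWhile (· == PLetter.X)) = paddedVal s := by
    intro s
    induction s using List.reverseRecOn with
    | nil => rfl
    | append_singleton s y ih =>
      by_cases hy : y = .X
      · subst hy
        rw [paddedVal_concat_X, ← ih, List.rdropWhile_concat_pos _ _ _ (by simp)]
      · rw [List.rdropWhile_concat_neg _ _ _ (by simpa using hy)]
  rw [core_eq_rdropWhile, hrdrop, hdrop]

/-- The parsings counted by the open value, in terms of parsings of the core. -/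
theorem setOf_isOpenParsing (W : PWord) :
    {L | IsOpenParsing W L} =
      between [.X] [.A, .A, .A] [] [] (core W) ∪
        (([.X, .A, .A] :: ·) '' between [.A, .A, .A] [.A, .A, .A] [.A, .A] [] (core W) ∪
          ([.X, .X, .A] :: ·) '' between [.A, .A, .A] [.A, .A, .A] [.A] [] (core W)) := by
  have hhead := head?_core_ne W
  have hlast := getLast?_core_ne W
  ext L
  simp only [Set.mem_union, Set.mem_image, mem_between_AAA, List.append_nil, Set.mem_ofPred_eq]
  constructor
  · rintro ⟨hT, hcore, h⟩
    cases L with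
    | nil => exact Or.inl ⟨by simp [tightChain_singleton, tightWords], by simpa [core] using hcore⟩
    | cons w M =>
      obtain ⟨hX, hXA, hBA, hl⟩ := h (by simp)
      have hflat : (w :: M).flatten.getLast? ≠ some .X := by
        rw [Ne, getLast?_flatten_eq_X_iff hT.1, List.getLast?_eq_some_getLast (by simp),
          Option.some_inj]
        exact hl
      rw [core_eq_dropWhile hflat] at hcore
      have hw := hT.1 w (by simp)
      have hT' : 2 < w.length → TightChain ([.A, .A, .A] :: M) := fun h' =>
        (tightChain_cons_iff_of_length hw h' M).1 hT
      simp only [tightWords, List.mem_cons, List.not_mem_nil, or_false] at hw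
      rcases hw with rfl | rfl | rfl | rfl | rfl | rfl | rfl | rfl <;>
        simp at hX hXA hBA hcore hT'
      · exact Or.inr (Or.inl ⟨M, ⟨hT', by simpa using hcore⟩, rfl⟩)
      · exact Or.inl ⟨by simp [tightChain_cons_cons, hT, Bad, tightWords], by simpa using hcore⟩
      · exact Or.inl ⟨by simp [tightChain_cons_cons, hT, Bad, tightWords], by simpa using hcore⟩
      · exact Or.inl ⟨by simp [tightChain_cons_cons, hT, Bad, tightWords], by simpa using hcore⟩
      · exact Or.inr (Or.inr ⟨M, ⟨hT', by simpa using hcore⟩, rfl⟩)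
  · have hgetLast : ∀ {w : PWord} {M : List PWord}, TightChain (w :: M) →
        ∀ {p : PWord}, p ++ core W = (w :: M).flatten → p.getLast? ≠ some .X ∨ core W ≠ [] →
        (w :: M).flatten.getLast? ≠ some .X ∧ (w :: M).getLast (by simp) ≠ [.X] := by
      intro w M hT p hp hne
      have h₁ : (w :: M).flatten.getLast? ≠ some .X := by
        rw [← hp, List.getLast?_append]
        cases hc : (core W).getLast? with
        | none =>
          have : core W = [] := by simpa using hc
          simpa [this] using hne
        | some a =>
          rw [hc] at hlast
          simpa using hlast
      refine ⟨h₁, fun h₂ => h₁ ?_⟩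
      rw [getLast?_flatten_eq_X_iff hT.1, List.getLast?_eq_some_getLast (by simp), h₂]
    rintro (⟨h₁, h₂⟩ | ⟨M, ⟨h₁, h₂⟩, rfl⟩ | ⟨M, ⟨h₁, h₂⟩, rfl⟩)
    · rw [List.nil_append] at h₂
      refine ⟨h₁.of_cons, ?_, ?_⟩
      · rw [h₂, core_eq_dropWhile hlast]
        cases hc : core W with
        | nil => rfl
        | cons y s =>
          have : y ≠ .X := by simpa [hc] using hhead
          simp [this]
      · intro hne
        cases L with
        | nil => simp at hne
        | cons w M =>
          have hl := (hgetLast h₁.of_cons (p := []) (by simp [h₂]) (by simp)).2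
          rw [tightChain_cons_cons] at h₁
          have hb := h₁.2.1
          simp only [Bad, true_and, not_or] at hb
          refine ⟨?_, hb.1, hb.2, hl⟩
          rintro rfl
          rw [← h₂] at hhead
          simp at hhead
    · rw [← tightChain_cons_iff_of_length (w := [.X, .A, .A]) (by simp [tightWords])
          (by simp)] at h₁
      have hl := hgetLast h₁ (p := [.X]) (by simp [← h₂]) (by simp [← h₂])
      refine ⟨h₁, ?_, fun _ => ⟨by simp, by simp, by simp, hl.2⟩⟩
      rw [core_eq_dropWhile hl.1, ← h₂]
      simp
    · rw [← tightChain_cons_iff_of_length (w := [.X, .X, .A]) (by simp [tightWords])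
          (by simp)] at h₁
      have hl := hgetLast h₁ (p := [.X, .X]) (by simp [← h₂]) (by simp [← h₂])
      refine ⟨h₁, ?_, fun _ => ⟨by simp, by simp, by simp, hl.2⟩⟩
      rw [core_eq_dropWhile hl.1, ← h₂]
      simp

theorem IsOpenParsing.length_lt {W : PWord} {L : List PWord} (h : IsOpenParsing W L) :
    L.length < W.length + 3 := by
  have hflat := length_le_length_flatten h.1.1
  have hcore := length_core_le W
  have hmem : L ∈ {L | IsOpenParsing W L} := h
  rw [setOf_isOpenParsing] at hmem
  simp only [Set.mem_union, Set.mem_image, mem_between_AAA, List.append_nil] at hmem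
  rcases hmem with ⟨-, h₂⟩ | ⟨M, ⟨-, h₂⟩, rfl⟩ | ⟨M, ⟨-, h₂⟩, rfl⟩
  all_goals
    rw [← h₂] at hcore
    simp at hcore hflat ⊢
    lia

theorem openVal_eq_paddedVal (W : PWord) : openVal W = paddedVal W := by
  have hf := between_finite
  have hXA : freeVal [.X, .A] [] (core W) = 0 := by
    rw [freeVal]
    convert setVal_empty
    rw [Set.eq_empty_iff_forall_notMem]
    rintro L ⟨-, h⟩
    apply head?_core_ne W
    rw [← h]
    rfl
  rw [openVal, sum_ite_eq_setVal (P := IsOpenParsing W) fun L h => ⟨h.1.1, h.length_lt⟩,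
    ← paddedVal_core, paddedVal, hXA, setOf_isOpenParsing,
    setVal_union _ (hf _ _ _ _ _) (((hf _ _ _ _ _).image _).union ((hf _ _ _ _ _).image _)),
    setVal_union _ ((hf _ _ _ _ _).image _) ((hf _ _ _ _ _).image _),
    setVal_image_cons _ (hf _ _ _ _ _), setVal_image_cons _ (hf _ _ _ _ _), wordVal_XAA,
    wordVal_XXA]
  · simp only [afterXVal, freeVal]
    ring
  · rw [Set.disjoint_left]
    simp
  · rw [Set.disjoint_left]
    have hhead := head?_core_ne W
    rintro L ⟨-, h⟩ (⟨M, -, rfl⟩ | ⟨M, -, rfl⟩)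
    all_goals
      rw [← h] at hhead
      simp at hhead

open PLetter in
/-- **Main cyclic identity, first case.**  If `W` does not both start with the letter
`A` and end with the letter `A`, then `|(WX)| + 2|(WB)| - |W| = 0`. -/
theorem main_identity_easy_case (W : PWord)
    (hW : ¬ (W.head? = some A ∧ W.getLast? = some A)) :
    cycVal (W ++ [X]) + 2 * cycVal (W ++ [B]) - openVal W = 0 := by
  rw [cycVal_add_two_mul_cycVal, openVal_eq_paddedVal, sub_self]
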